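/- Let Q be a finitely generated projective left Λ-module, C a Λ-submodule of Q, and M = Q/C. Every g ∈ Hom_Λ(Q, JQ) with g(C) ⊆ C induces a Λ-linear map ḡ : M → JM, x + C ↦ g(x) + C (where JM = (JQ + C)/C). The resulting K-linear map { g ∈ Hom_Λ(Q, JQ) : g(C) ⊆ C } → Hom_Λ(M, JM), g ↦ ḡ, is surjective, and its kernel is exactly { g ∈ Hom_Λ(Q, JQ) : g(Q) ⊆ C ∩ JQ }. -/

import Mathlib

/-- The radical submodule `J•X` of a `Λ`-module `X`, where `J` is the Jacobson radical of `Λ`. -/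
def radSMul (Λ : Type*) [Ring Λ] (X : Type*) [AddCommGroup X] [Module Λ X] :
    Submodule Λ X :=
  (⊥ : Ideal Λ).jacobson • (⊤ : Submodule Λ X)

/-- The stabilizer `{ g ∈ Hom_Λ(Q, JQ) : g(C) ⊆ C }`, a `K`-subspace of `Hom_Λ(Q, JQ)`. -/
def homStab (K : Type*) [Field K] (Λ : Type*) [Ring Λ] [Algebra K Λ]
    (Q : Type*) [AddCommGroup Q] [Module Λ Q] [Module K Q] [IsScalarTower K Λ Q]
    (C : Submodule Λ Q) :
    Submodule K (Q →ₗ[Λ] ↥(radSMul Λ Q)) where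
  carrier := {g | ∀ x ∈ C, ((g x : Q) ∈ C)}
  add_mem' {g h} hg hh x hx := by
    simpa using C.add_mem (hg x hx) (hh x hx)
  zero_mem' x hx := by simp
  smul_mem' k g hg x hx := by
    simpa using C.smul_of_tower_mem k (hg x hx)

theorem map_radSMul_mkQ (Λ : Type*) [Ring Λ] (Q : Type*) [AddCommGroup Q] [Module Λ Q]
    (C : Submodule Λ Q) : (radSMul Λ Q).map C.mkQ = radSMul Λ (Q ⧸ C) := by
  unfold radSMul
  rw [Submodule.map_smul'', Submodule.map_top, Submodule.range_mkQ]

/-- Let `Λ` be a finite-dimensional algebra over a field `K`, `Q` a finitely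
generated projective left `Λ`-module, `C ⊆ Q` a submodule and `M = Q/C`.  Every
`g ∈ Hom_Λ(Q, JQ)` with `g(C) ⊆ C` induces `ḡ : M → JM`, `x + C ↦ g(x) + C`; the resulting
`K`-linear map `Stab → Hom_Λ(M, JM)`, `g ↦ ḡ`, is surjective with kernel exactly
`{ g : g(Q) ⊆ C ∩ JQ }`. -/
theorem stab_to_hom_quotient_surjective_with_kernel
    (K : Type*) [Field K] (Λ : Type*) [Ring Λ] [Algebra K Λ] [FiniteDimensional K Λ]
    (Q : Type*) [AddCommGroup Q] [Module Λ Q] [Module K Q] [IsScalarTower K Λ Q]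
    [Module.Finite Λ Q] [Module.Projective Λ Q]
    (C : Submodule Λ Q) :
    ∃ Φ : ↥(homStab K Λ Q C) →ₗ[K] ((Q ⧸ C) →ₗ[Λ] ↥(radSMul Λ (Q ⧸ C))),
      (∀ (g : ↥(homStab K Λ Q C)) (x : Q),
        ((Φ g (Submodule.Quotient.mk x) : ↥(radSMul Λ (Q ⧸ C))) : Q ⧸ C)
          = Submodule.Quotient.mk (((g : Q →ₗ[Λ] ↥(radSMul Λ Q)) x : Q))) ∧
      Function.Surjective Φ ∧
      ∀ g : ↥(homStab K Λ Q C),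
        Φ g = 0 ↔ ∀ x : Q, ((g : Q →ₗ[Λ] ↥(radSMul Λ Q)) x : Q) ∈ C ⊓ radSMul Λ Q := by
  classical
  have hmap := map_radSMul_mkQ Λ Q C
  have hmem : ∀ x ∈ radSMul Λ Q, C.mkQ x ∈ radSMul Λ (Q ⧸ C) := fun x hx =>
    hmap ▸ Submodule.mem_map_of_mem hx
  let p : ↥(radSMul Λ Q) →ₗ[Λ] ↥(radSMul Λ (Q ⧸ C)) := C.mkQ.restrict hmem
  have hpv : ∀ y, ((p y : ↥(radSMul Λ (Q ⧸ C))) : Q ⧸ C) = Submodule.Quotient.mk (y : Q) :=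
    fun y => rfl
  have hp : Function.Surjective p := by
    rintro ⟨y, hy⟩
    obtain ⟨x, hx, hxy⟩ := Submodule.mem_map.1 (hmap.symm ▸ hy)
    exact ⟨⟨x, hx⟩, Subtype.ext hxy⟩
  have hker : ∀ g : ↥(homStab K Λ Q C),
      C ≤ LinearMap.ker (p ∘ₗ (g : Q →ₗ[Λ] ↥(radSMul Λ Q))) := by
    intro g x hx
    rw [LinearMap.mem_ker]
    apply Subtype.ext
    exact (Submodule.Quotient.mk_eq_zero C).2 (g.2 x hx)
  let Φ : ↥(homStab K Λ Q C) →ₗ[K] ((Q ⧸ C) →ₗ[Λ] ↥(radSMul Λ (Q ⧸ C))) :=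
    { toFun := fun g => C.liftQ (p ∘ₗ (g : Q →ₗ[Λ] ↥(radSMul Λ Q))) (hker g)
      map_add' := by
        intro g h
        ext x
        simp
      map_smul' := by
        intro k g
        apply Submodule.linearMap_qext
        ext x
        rfl }
  have hΦ : ∀ (g : ↥(homStab K Λ Q C)) (x : Q),
      Φ g (Submodule.Quotient.mk x) = p ((g : Q →ₗ[Λ] ↥(radSMul Λ Q)) x) := fun g x => rfl
  refine ⟨Φ, fun g x => rfl, ?_, ?_⟩
  · intro f
    obtain ⟨g, hg⟩ := Module.projective_lifting_property p (f ∘ₗ C.mkQ) hp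
    have hgx : ∀ x, p (g x) = f (Submodule.Quotient.mk x) := fun x => LinearMap.congr_fun hg x
    refine ⟨⟨g, ?_⟩, ?_⟩
    · intro x hx
      rw [← Submodule.Quotient.mk_eq_zero C, ← hpv, hgx, (Submodule.Quotient.mk_eq_zero C).2 hx]
      simp
    · apply Submodule.linearMap_qext
      exact LinearMap.ext hgx
  · intro g
    constructor
    · intro h x
      refine ⟨?_, Subtype.property _⟩
      have := hΦ g x
      rw [h] at this
      have h2 := hpv ((g : Q →ₗ[Λ] ↥(radSMul Λ Q)) x)
      rw [← this] at h2
      exact (Submodule.Quotient.mk_eq_zero C).1 h2.symm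
    · intro h
      apply Submodule.linearMap_qext
      refine LinearMap.ext fun x => Subtype.ext ?_
      exact (Submodule.Quotient.mk_eq_zero C).2 (h x).1
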